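/- For every real z: 4 z² Q(z)(1 − Q(z)) ≤ 4/√(2eπ), and in particular 4 z² Q(z)(1 − Q(z)) ≤ 1. -/

import Mathlib

open Real

noncomputable section

/-- The standard Gaussian upper-tail function `Q(z) = (1/√(2π)) ∫_z^∞ e^{−x²/2} dx`. -/
def gaussQ (z : ℝ) : ℝ := (1 / Real.sqrt (2 * Real.pi)) * ∫ x in Set.Ioi z, Real.exp (-x ^ 2 / 2)

lemma aux_int : MeasureTheory.Integrable (fun x : ℝ => Real.exp (-x ^ 2 / 2)) := by
  have h := integrable_exp_neg_mul_sq (b := 1 / 2) (by norm_num)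
  refine h.congr (Filter.Eventually.of_forall fun x => ?_)
  simp only
  congr 1
  ring

lemma aux_int2 : MeasureTheory.Integrable (fun x : ℝ => x * Real.exp (-x ^ 2 / 2)) := by
  have h := integrable_mul_exp_neg_mul_sq (b := 1 / 2) (by norm_num)
  refine h.congr (Filter.Eventually.of_forall fun x => ?_)
  simp only
  congr 2
  ring

lemma gaussQ_nonneg (z : ℝ) : 0 ≤ gaussQ z := by
  unfold gaussQ
  refine mul_nonneg (by positivity) ?_
  exact MeasureTheory.integral_nonneg fun x => (Real.exp_pos _).le

lemma gaussQ_neg (z : ℝ) : gaussQ (-z) = 1 - gaussQ z := by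
  have h1 : ∫ x : ℝ, Real.exp (-x ^ 2 / 2) = Real.sqrt (2 * Real.pi) := by
    have h := integral_gaussian (1 / 2)
    rw [show Real.pi / (1 / 2) = 2 * Real.pi by ring] at h
    rw [← h]
    congr 1
    ext x
    congr 1
    ring
  have h2 : (∫ x in Set.Iic z, Real.exp (-x ^ 2 / 2)) + ∫ x in Set.Ioi z, Real.exp (-x ^ 2 / 2)
      = ∫ x : ℝ, Real.exp (-x ^ 2 / 2) :=
    intervalIntegral.integral_Iic_add_Ioi aux_int.integrableOn aux_int.integrableOn
  have h3 := integral_comp_neg_Iic z (fun x : ℝ => Real.exp (-x ^ 2 / 2))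
  simp only [neg_sq] at h3
  have hs : Real.sqrt (2 * Real.pi) ≠ 0 := by positivity
  unfold gaussQ
  rw [← h3, eq_sub_iff_add_eq, ← mul_add, h2, h1]
  field_simp

lemma mills (z : ℝ) : z * ∫ x in Set.Ioi z, Real.exp (-x ^ 2 / 2) ≤ Real.exp (-z ^ 2 / 2) := by
  have h1 : ∫ x in Set.Ioi z, x * Real.exp (-x ^ 2 / 2) = 0 - (-Real.exp (-z ^ 2 / 2)) := by
    refine MeasureTheory.integral_Ioi_of_hasDerivAt_of_tendsto'
      (f := fun x => -Real.exp (-x ^ 2 / 2)) ?_ aux_int2.integrableOn ?_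
    · intro x _
      have h0 : HasDerivAt (fun y : ℝ => -y ^ 2 / 2) (-x) x := by
        have h := ((hasDerivAt_pow 2 x).fun_neg).div_const 2
        refine h.congr_deriv ?_
        norm_num
        ring
      have h := h0.exp.fun_neg
      refine h.congr_deriv ?_
      ring
    · rw [← neg_zero]
      refine Filter.Tendsto.neg (Real.tendsto_exp_atBot.comp ?_)
      have : Filter.Tendsto (fun x : ℝ => x ^ 2 / 2) Filter.atTop Filter.atTop :=
        (Filter.tendsto_pow_atTop (by norm_num)).atTop_div_const (by norm_num)
      refine (Filter.tendsto_neg_atTop_atBot.comp this).congr fun x => ?_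
      simp only [Function.comp]
      ring
  have h2 : ∫ x in Set.Ioi z, z * Real.exp (-x ^ 2 / 2)
      ≤ ∫ x in Set.Ioi z, x * Real.exp (-x ^ 2 / 2) := by
    refine MeasureTheory.setIntegral_mono_on (aux_int.const_mul z).integrableOn
      aux_int2.integrableOn measurableSet_Ioi fun x hx => ?_
    exact mul_le_mul_of_nonneg_right (le_of_lt hx) (Real.exp_pos _).le
  rw [MeasureTheory.integral_const_mul] at h2
  linarith

lemma sq_bound (z : ℝ) (hz : 0 ≤ z) :
    z ^ 2 * gaussQ z ≤ 1 / Real.sqrt (2 * Real.exp 1 * Real.pi) := by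
  have hs : 0 < Real.sqrt (2 * Real.pi) := by positivity
  have h1 := mul_le_mul_of_nonneg_left (mills z) hz
  have h2 : z * Real.exp (-z ^ 2 / 2) ≤ Real.exp (-(1 / 2)) := by
    have h3 : z ≤ Real.exp ((z ^ 2 - 1) / 2) := by
      nlinarith [Real.add_one_le_exp ((z ^ 2 - 1) / 2), sq_nonneg (z - 1)]
    calc z * Real.exp (-z ^ 2 / 2)
        ≤ Real.exp ((z ^ 2 - 1) / 2) * Real.exp (-z ^ 2 / 2) :=
          mul_le_mul_of_nonneg_right h3 (Real.exp_pos _).le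
      _ = Real.exp (-(1 / 2)) := by
          rw [← Real.exp_add]
          congr 1
          ring
  have h4 : Real.sqrt (2 * Real.exp 1 * Real.pi) = Real.sqrt (2 * Real.pi) * Real.exp (1 / 2) := by
    rw [show 2 * Real.exp 1 * Real.pi = 2 * Real.pi * Real.exp 1 by ring,
      Real.sqrt_mul (by positivity), Real.exp_half]
  have h5 : 1 / Real.sqrt (2 * Real.exp 1 * Real.pi)
      = 1 / Real.sqrt (2 * Real.pi) * Real.exp (-(1 / 2)) := by
    rw [h4, Real.exp_neg]
    field_simp
  rw [h5]
  unfold gaussQ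
  calc _ = 1 / Real.sqrt (2 * Real.pi) *
        (z * (z * ∫ x in Set.Ioi z, Real.exp (-x ^ 2 / 2))) := by ring
    _ ≤ _ := mul_le_mul_of_nonneg_left (h1.trans h2) (by positivity)

lemma main_pos (z : ℝ) (hz : 0 ≤ z) :
    4 * z ^ 2 * gaussQ z * (1 - gaussQ z) ≤ 4 / Real.sqrt (2 * Real.exp 1 * Real.pi) := by
  have h1 := sq_bound z hz
  have h2 := gaussQ_nonneg z
  have h4 : 0 ≤ z ^ 2 * gaussQ z := by positivity
  have h5 : 4 / Real.sqrt (2 * Real.exp 1 * Real.pi)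
    = 4 * (1 / Real.sqrt (2 * Real.exp 1 * Real.pi)) := by ring
  rw [h5]
  nlinarith [mul_nonneg h4 h2]

/-- `4 z² Q(z)(1 − Q(z)) ≤ 4/√(2eπ) ≤ 1` for every real `z`. -/
theorem stmt8 (z : ℝ) :
    4 * z ^ 2 * gaussQ z * (1 - gaussQ z) ≤ 4 / Real.sqrt (2 * Real.exp 1 * Real.pi) ∧
    4 * z ^ 2 * gaussQ z * (1 - gaussQ z) ≤ 1 := by
  have h1 : 4 * z ^ 2 * gaussQ z * (1 - gaussQ z)
      ≤ 4 / Real.sqrt (2 * Real.exp 1 * Real.pi) := by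
    rcases le_total 0 z with hz | hz
    · exact main_pos z hz
    · have h := main_pos (-z) (by linarith)
      rw [gaussQ_neg] at h
      refine le_trans (le_of_eq ?_) h
      ring
  refine ⟨h1, h1.trans ?_⟩
  rw [div_le_one (by positivity)]
  apply Real.le_sqrt_of_sq_le
  have he := Real.exp_one_gt_d9
  have hp := Real.pi_gt_d2
  nlinarith
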